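/- arXiv:2105.02496 — 3 statements merged into one kernel-verified Lean document; each statement's English description precedes it below -/
import Mathlib

section
/- Let G be a prolific graph. Then the average degree strictly increases after one iteration: d(L(G)) > d(G). -/
open SimpleGraph

/-- A bundled simple graph: a vertex type together with a simple graph on it. -/
structure FGraph where
  V : Type
  G : SimpleGraph V

/-- The line graph of a bundled graph: the vertices are the edges of `G`, two distinct
edges being adjacent iff they share an endpoint. -/
def FGraph.line (X : FGraph) : FGraph := ⟨X.G.edgeSet, X.G.lineGraph⟩

/-- The `k`-fold iterated line graph `L^k(G)`. -/
def FGraph.iter (X : FGraph) (k : ℕ) : FGraph := FGraph.line^[k] X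

/-- The number of vertices `n(G)`. -/
noncomputable def FGraph.n (X : FGraph) : ℕ := Nat.card X.V

/-- The number of edges `e(G)`. -/
noncomputable def FGraph.e (X : FGraph) : ℕ := Nat.card X.G.edgeSet

/-- The degree of a vertex. -/
noncomputable def FGraph.deg (X : FGraph) (v : X.V) : ℕ := Nat.card (X.G.neighborSet v)

/-- The maximum degree `Δ(G)`. -/
noncomputable def FGraph.maxDeg (X : FGraph) : ℕ := sSup (Set.range X.deg)

/-- The minimum degree `δ(G)`. -/
noncomputable def FGraph.minDeg (X : FGraph) : ℕ := sInf (Set.range X.deg)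

/-- The average degree `d(G) = 2e(G)/n(G)`, as a rational number. -/
noncomputable def FGraph.avgDeg (X : FGraph) : ℚ := 2 * (X.e : ℚ) / (X.n : ℚ)

/-- A graph is prolific if it is connected and isomorphic to no path graph `P_k`,
to no cycle graph `C_k`, and not to the star `K_{1,3}`. -/
def FGraph.Prolific (X : FGraph) : Prop :=
  X.G.Connected ∧
  (∀ k : ℕ, IsEmpty (X.G ≃g pathGraph k)) ∧
  (∀ k : ℕ, IsEmpty (X.G ≃g cycleGraph k)) ∧
  IsEmpty (X.G ≃g completeBipartiteGraph (Fin 1) (Fin 3))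

lemma adj_of_max {V : Type} (G : SimpleGraph V) (k : ℕ) (f : ℕ → V)
    (hdeg : ∀ v a b c, G.Adj v a → G.Adj v b → G.Adj v c → a = b ∨ a = c ∨ b = c)
    (hinj : ∀ i j, i < k → j < k → f i = f j → i = j)
    (hadj : ∀ i, i + 1 < k → G.Adj (f i) (f (i + 1)))
    (i j : ℕ) (hij : i < j) (hj : j < k) (h : G.Adj (f i) (f j)) :
    i + 1 = j ∨ (i = 0 ∧ j + 1 = k) := by
  rcases Nat.eq_zero_or_pos i with h0 | h0
  · subst h0
    by_cases hk : j + 1 = k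
    · exact Or.inr ⟨rfl, hk⟩
    · left
      have h1 := hadj j (by omega)
      have h2 := hadj (j - 1) (by omega)
      rw [show j - 1 + 1 = j by omega] at h2
      rcases hdeg (f j) _ _ _ h.symm h1 h2.symm with e | e | e
      · have := hinj _ _ (by omega) (by omega) e; omega
      · have := hinj _ _ (by omega) (by omega) e; omega
      · have := hinj _ _ (by omega) (by omega) e; omega
  · left
    have h1 := hadj i (by omega)
    have h2 := hadj (i - 1) (by omega)
    rw [show i - 1 + 1 = i by omega] at h2
    rcases hdeg (f i) _ _ _ h h1 h2.symm with e | e | e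
    · have := hinj _ _ (by omega) (by omega) e; omega
    · have := hinj _ _ (by omega) (by omega) e; omega
    · have := hinj _ _ (by omega) (by omega) e; omega

lemma path_or_cycle {V : Type} [Finite V] (G : SimpleGraph V) (hc : G.Connected)
    (hdeg : ∀ v a b c, G.Adj v a → G.Adj v b → G.Adj v c → a = b ∨ a = c ∨ b = c) :
    ∃ k, Nonempty (G ≃g pathGraph k) ∨ Nonempty (G ≃g cycleGraph k) := by
  classical
  have := Fintype.ofFinite V
  let P : ℕ → Prop := fun k => ∃ f : ℕ → V, (∀ i j, i < k → j < k → f i = f j → i = j) ∧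
    (∀ i, i + 1 < k → G.Adj (f i) (f (i + 1)))
  have hbd : ∀ k, P k → k ≤ Fintype.card V := by
    rintro k ⟨f, hf, -⟩
    have := Fintype.card_le_of_injective (fun i : Fin k => f i)
      (fun i j h => Fin.ext (hf i j i.2 j.2 h))
    simpa using this
  obtain ⟨v0⟩ := hc.nonempty
  have hP1 : P 1 := ⟨fun _ => v0, by intros; omega, by intros; omega⟩
  set k := Nat.findGreatest P (Fintype.card V) with hk
  have hPk : P k := Nat.findGreatest_spec (hbd 1 hP1) hP1
  have hk1 : 1 ≤ k := Nat.le_findGreatest (hbd 1 hP1) hP1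
  have hmax : ¬ P (k + 1) := fun h => by
    have := Nat.le_findGreatest (hbd _ h) h
    omega
  obtain ⟨f, hinj, hadj⟩ := hPk
  have hclosed : ∀ i w, i < k → G.Adj (f i) w → ∃ j < k, f j = w := by
    intro i w hi hw
    by_contra hno
    push Not at hno
    by_cases h0 : i = 0
    · subst h0
      refine hmax ⟨fun n => if n = 0 then w else f (n - 1), ?_, ?_⟩
      · intro a b ha hb hab
        by_cases ha0 : a = 0 <;> by_cases hb0 : b = 0 <;> simp only [ha0, hb0, if_true, if_false] at hab ⊢
        · exact absurd hab.symm (hno _ (by omega))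
        · exact absurd hab (hno _ (by omega))
        · have := hinj _ _ (by omega) (by omega) hab; omega
      · intro a ha
        by_cases ha0 : a = 0
        · subst ha0; simpa using hw.symm
        · have := hadj (a - 1) (by omega)
          rw [show a - 1 + 1 = a by omega] at this
          simpa [ha0] using this
    · by_cases hl : i + 1 = k
      · refine hmax ⟨fun n => if n = k then w else f n, ?_, ?_⟩
        · intro a b ha hb hab
          by_cases ha0 : a = k <;> by_cases hb0 : b = k <;> simp only [ha0, hb0, if_true, if_false] at hab ⊢
          · exact absurd hab.symm (hno _ (by omega))
          · exact absurd hab (hno _ (by omega))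
          · have := hinj _ _ (by omega) (by omega) hab; omega
        · intro a ha
          by_cases ha0 : a + 1 = k
          · have : a = i := by omega
            subst this
            simpa [ha0, hi.ne] using hw
          · have h3 : a ≠ k := by omega
            simpa [ha0, h3] using hadj a (by omega)
      · have h1 := hadj i (by omega)
        have h2 := hadj (i - 1) (by omega)
        rw [show i - 1 + 1 = i by omega] at h2
        rcases hdeg (f i) _ _ _ hw h1 h2.symm with e | e | e
        · exact hno _ (by omega) e.symm
        · exact hno _ (by omega) e.symm
        · have := hinj _ _ (by omega) (by omega) e; omega
  have hsurj : ∀ w, ∃ j < k, f j = w := by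
    intro w
    have hr : ∀ a b, G.Walk a b → (∃ j < k, f j = a) → ∃ j < k, f j = b := by
      intro a b p
      induction p with
      | nil => exact id
      | cons h p ih =>
        rintro ⟨j, hj, rfl⟩
        exact ih (hclosed j _ hj h)
    obtain ⟨p⟩ := hc.preconnected (f 0) w
    exact hr _ _ p ⟨0, by omega, rfl⟩
  let F : Fin k ≃ V := Equiv.ofBijective (fun i => f i)
    ⟨fun i j h => Fin.ext (hinj i j i.2 j.2 h), fun w => by
      obtain ⟨j, hj, h⟩ := hsurj w
      exact ⟨⟨j, hj⟩, h⟩⟩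
  have hF : ∀ i, F i = f i := fun _ => rfl
  have key := adj_of_max G k f hdeg hinj hadj
  refine ⟨k, ?_⟩
  by_cases hcyc : 3 ≤ k ∧ G.Adj (f 0) (f (k - 1))
  · right
    refine ⟨(RelIso.mk F ?_ : cycleGraph k ≃g G).symm⟩
    intro a b
    obtain ⟨a, ha⟩ := a
    obtain ⟨b, hb⟩ := b
    rw [cycleGraph_adj', hF, hF]
    simp only [Fin.sub_def]
    obtain ⟨hk3, hcyc⟩ := hcyc
    have hmod : ∀ x y, x < k → y < k → ((k - y + x) % k = 1 ↔ (y + 1 = x ∨ (x = 0 ∧ y + 1 = k))) := by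
      intro x y hx hy
      by_cases hxy : y ≤ x
      · rw [show k - y + x = (x - y) + k by omega, Nat.add_mod_right, Nat.mod_eq_of_lt (by omega)]
        omega
      · rw [Nat.mod_eq_of_lt (by omega)]
        omega
    rw [hmod _ _ ha hb, hmod _ _ hb ha]
    constructor
    · intro h
      rcases lt_trichotomy a b with hab | hab | hab
      · have := key a b hab hb h; omega
      · subst hab; exact absurd h (G.irrefl)
      · have := key b a hab ha h.symm; omega
    · rintro ((h | ⟨h, h'⟩) | (h | ⟨h, h'⟩))
      · subst h; exact (hadj _ ha).symm
      · obtain rfl : b = k - 1 := by omega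
        subst h; exact hcyc
      · subst h; exact (hadj _ hb)
      · obtain rfl : a = k - 1 := by omega
        subst h; exact hcyc.symm
  · left
    refine ⟨(RelIso.mk F ?_ : pathGraph k ≃g G).symm⟩
    intro a b
    obtain ⟨a, ha⟩ := a
    obtain ⟨b, hb⟩ := b
    rw [pathGraph_adj, hF, hF]
    simp only
    have key' : ∀ i j, i < j → j < k → G.Adj (f i) (f j) → i + 1 = j := by
      intro i j hij hj h
      rcases key i j hij hj h with e | ⟨rfl, e⟩
      · exact e
      · obtain rfl : j = k - 1 := by omega
        have : ¬ 3 ≤ k := fun h3 => hcyc ⟨h3, h⟩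
        omega
    constructor
    · intro h
      rcases lt_trichotomy a b with hab | hab | hab
      · exact Or.inl (key' a b hab hb h)
      · subst hab; exact absurd h (G.irrefl)
      · exact Or.inr (key' b a hab ha h.symm)
    · rintro (h | h)
      · subst h; exact (hadj _ hb)
      · subst h; exact (hadj _ ha).symm

lemma line_edges {V : Type} [Fintype V] [DecidableEq V] (G : SimpleGraph V) [DecidableRel G.Adj] :
    ∑ v, G.degree v * (G.degree v - 1) ≤ 2 * Nat.card G.lineGraph.edgeSet := by
  classical
  rw [Nat.card_eq_fintype_card, ← edgeFinset_card, ← dart_card_eq_twice_card_edges]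
  have h1 : ∑ v, G.degree v * (G.degree v - 1) =
      Fintype.card (Σ v : V, {p : V × V // p ∈ (G.neighborFinset v).offDiag}) := by
    rw [Fintype.card_sigma]
    refine Finset.sum_congr rfl fun v _ => ?_
    rw [Fintype.card_coe, Finset.offDiag_card, card_neighborFinset_eq_degree, Nat.mul_sub_one]
  rw [h1]
  have hm : ∀ x : (Σ v : V, {p : V × V // p ∈ (G.neighborFinset v).offDiag}),
      G.Adj x.1 x.2.1.1 ∧ G.Adj x.1 x.2.1.2 ∧ x.2.1.1 ≠ x.2.1.2 := by
    rintro ⟨v, p, hp⟩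
    simpa [Finset.mem_offDiag] using hp
  refine Fintype.card_le_of_injective (fun x => 
    (⟨(⟨s(x.1, x.2.1.1), (hm x).1⟩, ⟨s(x.1, x.2.1.2), (hm x).2.1⟩), ?_⟩ : G.lineGraph.Dart)) ?_
  · rw [lineGraph_adj_iff_exists]
    refine ⟨?_, x.1, by simp, by simp⟩
    intro h
    have := congrArg Subtype.val h
    simp only [Sym2.congr_right] at this
    exact (hm x).2.2 this
  · intro x y hxy
    have hx := hm x
    have hy := hm y
    obtain ⟨v, ⟨a, b⟩, hp⟩ := x
    obtain ⟨w, ⟨c, d⟩, hq⟩ := y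
    simp only [Dart.mk.injEq, Prod.mk.injEq, Subtype.mk.injEq, Sym2.eq_iff] at hxy hx hy
    have : v = w ∧ a = c ∧ b = d := by
      grind
    obtain ⟨rfl, rfl, rfl⟩ := this
    rfl

lemma arith {V : Type} [Fintype V] (d : V → ℕ) (m : ℕ) (L : ℕ)
    (hd : ∑ v, d v = 2 * m) (hL : ∑ v, d v * (d v - 1) ≤ 2 * L)
    (hnm : Fintype.card V ≤ m + 1) (v0 : V) (h3 : 3 ≤ d v0) :
    (2 * (m : ℚ)) / (Fintype.card V : ℚ) < 2 * (L : ℚ) / (m : ℚ) := by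
  have hle : d v0 ≤ ∑ v, d v := Finset.single_le_sum (fun _ _ => Nat.zero_le _) (Finset.mem_univ v0)
  have hm : 2 ≤ m := by omega
  have hn : 1 ≤ Fintype.card V := Fintype.card_pos_iff.2 ⟨v0⟩
  set n := Fintype.card V with hn'
  have hdZ : ∑ v, (d v : ℤ) = 2 * m := by exact_mod_cast hd
  have hLZ : ∑ v, ((d v : ℤ) ^ 2) - 2 * m ≤ 2 * L := by
    rw [← hdZ, ← Finset.sum_sub_distrib]
    refine le_trans (le_of_eq ?_) (by exact_mod_cast hL : ((∑ v, d v * (d v - 1) : ℕ) : ℤ) ≤ 2 * L)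
    push_cast
    refine Finset.sum_congr rfl fun v _ => ?_
    rcases Nat.eq_zero_or_pos (d v) with h | h
    · simp [h]
    · rw [Nat.cast_sub h]; push_cast; ring
  set S := ∑ v, ((d v : ℤ) ^ 2) with hS
  have h3' : (3 : ℤ) ≤ d v0 := by exact_mod_cast h3
  have hquad : ∀ a b : ℤ, ∑ v, ((d v : ℤ) ^ 2 + a * d v + b) = S + a * (2 * m) + n * b := by
    intro a b
    rw [Finset.sum_add_distrib, Finset.sum_add_distrib, ← Finset.mul_sum, hdZ]
    simp [hn', hS]
  have main : 2 * (m : ℤ) * m < n * (S - 2 * m) := by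
    rcases lt_trichotomy m n with h | h | h
    · have hmn : (n : ℤ) = m + 1 := by exact_mod_cast (by omega : n = m + 1)
      have h1 : (2 : ℤ) ≤ ∑ v, ((d v : ℤ) ^ 2 + (-3) * d v + 2) := by
        refine le_trans (?_ : _ ≤ (d v0 : ℤ) ^ 2 + (-3) * d v0 + 2)
          (Finset.single_le_sum (f := fun v => (d v : ℤ) ^ 2 + (-3) * d v + 2) (fun v _ => ?_) (Finset.mem_univ v0))
        · nlinarith
        · rcases le_or_gt (d v : ℤ) 1 with h | h
          · nlinarith
          · nlinarith
      rw [hquad] at h1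
      have : (2:ℤ) ≤ m := by exact_mod_cast hm
      rw [hmn] at h1 ⊢
      nlinarith
    · have hmn : (n : ℤ) = m := by exact_mod_cast h.symm
      have h1 : (1 : ℤ) ≤ ∑ v, ((d v : ℤ) ^ 2 + (-4) * d v + 4) := by
        refine le_trans (?_ : _ ≤ (d v0 : ℤ) ^ 2 + (-4) * d v0 + 4)
          (Finset.single_le_sum (f := fun v => (d v : ℤ) ^ 2 + (-4) * d v + 4) (fun v _ => ?_) (Finset.mem_univ v0))
        · nlinarith
        · nlinarith [sq_nonneg ((d v : ℤ) - 2)]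
      rw [hquad] at h1
      have : (2:ℤ) ≤ m := by exact_mod_cast hm
      rw [hmn] at h1 ⊢
      nlinarith
    · have hcs : (∑ v, (d v : ℤ)) ^ 2 ≤ n * S := by
        have := sq_sum_le_card_mul_sum_sq (s := (Finset.univ : Finset V)) (f := fun v => (d v : ℤ))
        simpa [hn', hS] using this
      rw [hdZ] at hcs
      have : (n : ℤ) < m := by exact_mod_cast h
      have : (2:ℤ) ≤ m := by exact_mod_cast hm
      nlinarith
  have main2 : 2 * (m : ℤ) * m < 2 * L * n := by
    have : (n : ℤ) * (S - 2 * m) ≤ n * (2 * L) := by gcongr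
    linarith
  rw [div_lt_div_iff₀ (by exact_mod_cast hn) (by exact_mod_cast (by omega : 0 < m))]
  exact_mod_cast main2

/-- For a prolific graph, the average degree strictly increases: `d(L(G)) > d(G)`. -/
theorem avgDeg_line_gt (X : FGraph) [Finite X.V] (hp : X.Prolific) :
    X.avgDeg < X.line.avgDeg := by
  classical
  obtain ⟨V, G⟩ := X
  obtain ⟨hc, hpath, hcyc, -⟩ := hp
  change G.Connected at hc
  have hfin : Finite V := ‹_›
  have := Fintype.ofFinite V
  have h3 : ∃ v, 3 ≤ G.degree v := by
    by_contra hno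
    push Not at hno
    obtain ⟨k, h | h⟩ := path_or_cycle G hc (by
      intro v a b c ha hb hcc
      by_contra hne
      push Not at hne
      have h1 : ({a, b, c} : Finset V) ⊆ G.neighborFinset v := by
        intro x hx
        simp only [Finset.mem_insert, Finset.mem_singleton] at hx
        rw [mem_neighborFinset]
        rcases hx with rfl | rfl | rfl <;> assumption
      have h2 := Finset.card_le_card h1
      rw [Finset.card_eq_three.2 ⟨a, b, c, hne.1, hne.2.1, hne.2.2, rfl⟩,
        card_neighborFinset_eq_degree] at h2
      have := hno v
      omega)
    · exact h.elim (hpath k).false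
    · exact h.elim (hcyc k).false
  obtain ⟨v0, hv0⟩ := h3
  have hmE : G.edgeFinset.card = Nat.card G.edgeSet := by
    rw [edgeFinset_card, Nat.card_eq_fintype_card]
  have := arith (fun v => G.degree v) (Nat.card G.edgeSet) (Nat.card G.lineGraph.edgeSet)
    (by rw [← hmE]; exact G.sum_degrees_eq_twice_card_edges) (line_edges G)
    (by rw [← Nat.card_eq_fintype_card]; exact hc.card_vert_le_card_edgeSet_add_one) v0 hv0
  rw [← Nat.card_eq_fintype_card] at this
  exact this
end

section
/- Let G be a prolific graph. Then c(L(G)) > c(G), where c(H) denotes the circumference of H, i.e. the length of a longest cycle in H, taken to be 0 if H has no cycle. -/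
open SimpleGraph

/-- The circumference `c(G)`: the length of a longest cycle, taken to be `0` if
there is no cycle. -/
noncomputable def FGraph.circumf (X : FGraph) : ℕ :=
  sSup {n | ∃ (v : X.V) (w : X.G.Walk v v), w.IsCycle ∧ w.length = n}

theorem aux_cycle {V : Type} {G : SimpleGraph V} (F : ℕ → Sym2 V) (n : ℕ) (hn : 2 < n)
    (hE : ∀ i < n, F i ∈ G.edgeSet)
    (hinj : ∀ i < n, ∀ j < n, F i = F j → i = j)
    (hadj : ∀ i, i + 1 < n → ∃ v, v ∈ F i ∧ v ∈ F (i + 1))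
    (hwrap : ∃ v, v ∈ F (n - 1) ∧ v ∈ F 0) :
    ∃ (v : G.edgeSet) (p : G.lineGraph.Walk v v), p.IsCycle ∧ p.length = n := by
  rw [← cycleGraph_isContained_iff hn]
  have key : ∀ a b : Fin n, (a - b).val = 1 →
      G.lineGraph.Adj ⟨F b, hE b b.2⟩ ⟨F a, hE a a.2⟩ := by
    intro a b h
    rw [lineGraph_adj_iff_exists]
    have hab : a.val = b.val + 1 ∨ (a.val = 0 ∧ b.val = n - 1) := by
      rcases le_or_gt b a with h1 | h1
      · rw [Fin.sub_val_of_le h1] at h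
        have : b.val ≤ a.val := h1
        omega
      · rw [Fin.coe_sub_iff_lt.mpr h1] at h
        have : a.val < b.val := h1
        omega
    refine ⟨?_, ?_⟩
    · intro he
      have := hinj _ b.2 _ a.2 (Subtype.ext_iff.mp he)
      omega
    · rcases hab with h2 | ⟨h2, h3⟩
      · have := hadj b.val (by omega)
        simpa only [h2] using this
      · simpa only [h2, h3] using hwrap
  refine ⟨⟨⟨fun i => ⟨F i, hE i i.2⟩, ?_⟩, ?_⟩⟩
  · intro a b h
    rcases cycleGraph_adj'.mp h with h | h
    · exact (key _ _ h).symm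
    · exact key _ _ h
  · intro a b h
    exact Fin.ext (hinj _ a.2 _ b.2 (Subtype.ext_iff.mp h))

theorem aux_extend {V : Type} {G : SimpleGraph V} {v x : V} (w : G.Walk v v) (hw : w.IsCycle)
    (hx : G.Adj v x) (hxe : s(v, x) ∉ w.edges) :
    ∃ (v : G.edgeSet) (p : G.lineGraph.Walk v v), p.IsCycle ∧ p.length = w.length + 1 := by
  have h3 := hw.three_le_length
  have hnd : (s(v, x) :: w.edges).Nodup := List.nodup_cons.mpr ⟨hxe, hw.edges_nodup⟩
  have hlen : (s(v, x) :: w.edges).length = w.length + 1 := by simp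
  have hF : ∀ i < w.length, (s(v, x) :: w.edges).getD (i + 1) s(v, x)
      = s(w.getVert i, w.getVert (i + 1)) := by
    intro i hi
    rw [List.getD_cons_succ, List.getD_eq_getElem _ _ (by simpa using hi)]
    exact Walk.getElem_edges _
  refine aux_cycle (fun i => (s(v, x) :: w.edges).getD i s(v, x)) (w.length + 1) (by omega)
    ?_ ?_ ?_ ?_
  · intro i hi
    cases i with
    | zero => simpa using hx
    | succ i =>
      simp only [hF i (by omega)]
      exact w.adj_getVert_succ (by omega)
  · intro i hi j hj h
    beta_reduce at h
    rw [List.getD_eq_getElem _ _ (by omega), List.getD_eq_getElem _ _ (by omega)] at h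
    exact (hnd.getElem_inj_iff).mp h
  · intro i hi
    cases i with
    | zero =>
      refine ⟨v, by simp, ?_⟩
      simp only [hF 0 (by omega)]
      simp
    | succ i =>
      refine ⟨w.getVert (i + 1), ?_, ?_⟩
      · simp only [hF i (by omega)]; simp
      · simp only [hF (i + 1) (by omega)]; simp
  · refine ⟨v, ?_, by simp⟩
    have := hF (w.length - 1) (by omega)
    rw [show w.length - 1 + 1 = w.length by omega] at this
    simp only [Nat.add_sub_cancel, this]
    simp

/-- closed support implies everything -/
theorem aux_closed {V : Type} {G : SimpleGraph V} (hc : G.Connected) {S : Set V} {u : V}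
    (hu : u ∈ S) (h : ∀ x ∈ S, ∀ y, G.Adj x y → y ∈ S) (v : V) : v ∈ S := by
  obtain ⟨p⟩ := hc.preconnected u v
  induction p with
  | nil => exact hu
  | cons ha _ ih => exact ih (h _ hu _ ha)

theorem aux_cycleIso {V : Type} {G : SimpleGraph V} (hc : G.Connected) {u : V} (w : G.Walk u u)
    (hw : w.IsCycle) (h : ∀ x ∈ w.support, ∀ y, G.Adj x y → s(x, y) ∈ w.edges) :
    Nonempty (G ≃g cycleGraph w.length) := by
  have h3 := hw.three_le_length
  have hall : ∀ v, v ∈ w.support := fun v => aux_closed hc (S := {x | x ∈ w.support})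
    w.start_mem_support (fun x hx y hxy => w.snd_mem_support_of_mem_edges (h x hx y hxy)) v
  have hinj := hw.getVert_injOn'
  have hL : w.getVert w.length = w.getVert 0 := by simp
  let f : Fin w.length → V := fun i => w.getVert i
  have hf : Function.Bijective f := by
    constructor
    · intro a b hab
      exact Fin.ext (hinj (show a.val ≤ w.length - 1 by omega)
        (show b.val ≤ w.length - 1 by omega) hab)
    · intro v
      obtain ⟨n, hn, hnl⟩ := Walk.mem_support_iff_exists_getVert.mp (hall v)
      rcases hnl.lt_or_eq with hl | hl
      · exact ⟨⟨n, hl⟩, hn⟩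
      · exact ⟨⟨0, by omega⟩, by simp only [f]; rw [← hL, ← hl, hn]⟩
  have hinj' : ∀ i < w.length, ∀ j < w.length, w.getVert i = w.getVert j → i = j := fun i hi j hj e =>
    hinj (show i ≤ w.length - 1 by omega) (show j ≤ w.length - 1 by omega) e
  have hsub : ∀ a b : Fin w.length, (a - b).val = 1 ↔
      (a.val = b.val + 1 ∨ (a.val = 0 ∧ b.val = w.length - 1)) := by
    intro a b
    rcases le_or_gt b a with h1 | h1
    · rw [Fin.sub_val_of_le h1]
      have : b.val ≤ a.val := h1
      omega
    · rw [Fin.coe_sub_iff_lt.mpr h1]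
      have : a.val < b.val := h1
      omega
  have hsucc : ∀ a b : Fin w.length, ((a - b).val = 1 ↔ f a = w.getVert (b + 1)) := by
    intro a b
    rw [hsub]
    have := a.2
    have := b.2
    constructor
    · rintro (h | ⟨h, h'⟩)
      · simp [f, h]
      · simp only [f, h, h']
        rw [show w.length - 1 + 1 = w.length by omega, hL]
    · intro e
      by_cases hb : b.val + 1 < w.length
      · left; exact hinj' _ a.2 _ hb e
      · right
        have hb' : b.val + 1 = w.length := by omega
        rw [hb', hL] at e
        exact ⟨hinj' _ a.2 _ (by omega) e, by omega⟩
  have hadj : ∀ a b : Fin w.length, G.Adj (f a) (f b) ↔ (cycleGraph w.length).Adj a b := by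
    intro a b
    rw [cycleGraph_adj', hsucc, hsucc]
    constructor
    · intro hab
      have := h _ (hall _) _ hab
      obtain ⟨i, hi, e⟩ := (w.mk_mem_edges_iff_exists).mp this
      rw [Sym2.eq_iff] at e
      rcases e with ⟨e1, e2⟩ | ⟨e1, e2⟩
      · right
        have : i = a.val := hinj' _ hi _ a.2 e1
        rw [← e2, this]
      · left
        have : i = b.val := hinj' _ hi _ b.2 e1
        rw [← e2, this]
    · rintro (e | e)
      · rw [e]; exact (w.adj_getVert_succ b.2).symm
      · rw [e]; exact (w.adj_getVert_succ a.2)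
  refine ⟨RelIso.symm ⟨Equiv.ofBijective f hf, ?_⟩⟩
  intro a b
  exact hadj a b

theorem aux_end {V : Type} {G : SimpleGraph V} (hac : G.IsAcyclic) {u v : V} (w : G.Walk u v)
    (hw : w.IsPath)
    (hmax : ∀ (u' v' : V) (p' : G.Walk u' v') (_ : p'.IsPath), p'.length ≤ w.length)
    (y : V) (hy : G.Adj u y) : s(u, y) ∈ w.edges := by
  classical
  by_cases hs : y ∈ w.support
  · by_contra hne
    refine hac (Walk.cons hy.symm (w.takeUntil y hs)) ?_
    rw [Walk.cons_isCycle_iff]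
    refine ⟨hw.takeUntil hs, fun he => hne ?_⟩
    rw [Sym2.eq_swap]
    exact w.edges_takeUntil_subset_edges hs he
  · have := hmax _ _ (Walk.cons hy.symm w) ((Walk.cons_isPath_iff _ _).mpr ⟨hw, hs⟩)
    simp at this

theorem aux_pathIso {V : Type} [Finite V] {G : SimpleGraph V} (hc : G.Connected)
    (hac : G.IsAcyclic)
    (hdeg : ∀ v a b c, G.Adj v a → G.Adj v b → G.Adj v c → a = b ∨ a = c ∨ b = c) :
    ∃ k, Nonempty (G ≃g pathGraph k) := by
  classical
  have := hc.nonempty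
  obtain ⟨u, v, w, hw, hmax⟩ := Walk.exists_isPath_forall_isPath_length_le_length G
  have h : ∀ x ∈ w.support, ∀ y, G.Adj x y → s(x, y) ∈ w.edges := by
    intro x hx y hxy
    obtain ⟨n, hn, hnl⟩ := Walk.mem_support_iff_exists_getVert.mp hx
    by_cases h0 : n = 0
    · subst h0
      rw [Walk.getVert_zero] at hn
      subst hn
      exact aux_end hac w hw hmax y hxy
    by_cases h1 : n = w.length
    · subst h1
      rw [Walk.getVert_length] at hn
      subst hn
      have := aux_end hac w.reverse hw.reverse (by simpa using hmax) y hxy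
      simpa using this
    have e1 := w.adj_getVert_succ (i := n) (by omega)
    have e2 := w.adj_getVert_succ (i := n - 1) (by omega)
    rw [show n - 1 + 1 = n by omega] at e2
    rw [hn] at e1 e2
    rw [w.mk_mem_edges_iff_exists]
    rcases hdeg _ _ _ _ hxy e1 e2.symm with e | e | e
    · exact ⟨n, by omega, by rw [hn, e]⟩
    · exact ⟨n - 1, by omega, by rw [show n - 1 + 1 = n by omega, hn, e, Sym2.eq_swap]⟩
    · have := hw.getVert_injOn (show n + 1 ≤ w.length by omega)
        (show n - 1 ≤ w.length by omega) e
      omega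
  have hall : ∀ v, v ∈ w.support := fun v => aux_closed hc (S := {x | x ∈ w.support})
    w.start_mem_support (fun x hx y hxy => w.snd_mem_support_of_mem_edges (h x hx y hxy)) v
  have htop : w.toSubgraph = ⊤ := by
    ext a b
    · simp [hall]
    · rw [Walk.adj_toSubgraph_iff_mem_edges, Subgraph.top_adj]
      exact ⟨fun e => w.adj_of_mem_edges e, h _ (hall _) _⟩
  have e := hw.pathGraphIsoToSubgraph
  rw [htop] at e
  exact ⟨_, ⟨(e.trans Subgraph.topIso).symm⟩⟩

theorem aux_bdd (X : FGraph) [Finite X.V] :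
    BddAbove {n | ∃ (v : X.V) (w : X.G.Walk v v), w.IsCycle ∧ w.length = n} := by
  classical
  have := Fintype.ofFinite X.G.edgeSet
  refine ⟨X.G.edgeFinset.card, ?_⟩
  rintro n ⟨v, w, hw, rfl⟩
  exact hw.isTrail.length_le_card_edgeFinset

theorem aux_line (X : FGraph) [Finite X.V] {n : ℕ}
    (h : ∃ (v : X.G.edgeSet) (p : X.G.lineGraph.Walk v v), p.IsCycle ∧ p.length = n) :
    n ≤ X.line.circumf := by
  have : Finite X.line.V := inferInstanceAs (Finite X.G.edgeSet)
  exact le_csSup (aux_bdd X.line) h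

/-- For a prolific graph, the circumference strictly increases: `c(L(G)) > c(G)`. -/
theorem circumference_line_gt (X : FGraph) [Finite X.V] (hp : X.Prolific) :
    X.circumf < X.line.circumf := by
  classical
  obtain ⟨hc, hpath, hcyc, -⟩ := hp
  rcases Set.eq_empty_or_nonempty
    {n | ∃ (v : X.V) (w : X.G.Walk v v), w.IsCycle ∧ w.length = n} with he | hne
  · have h0 : X.circumf = 0 := by
      unfold FGraph.circumf
      rw [he]; simp
    have hac : X.G.IsAcyclic := by
      intro v w hw
      have : w.length ∈ {n | ∃ (v : X.V) (w : X.G.Walk v v), w.IsCycle ∧ w.length = n} :=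
        ⟨v, w, hw, rfl⟩
      rw [he] at this
      exact this
    rw [h0]
    by_contra hlt
    have hdeg : ∀ v a b c, X.G.Adj v a → X.G.Adj v b → X.G.Adj v c →
        a = b ∨ a = c ∨ b = c := by
      intro v a b c ha hb hc
      by_contra hne
      push Not at hne
      obtain ⟨h1, h2, h3⟩ := hne
      have := aux_line X (n := 3) (aux_cycle
        (fun i => if i = 0 then s(v, a) else if i = 1 then s(v, b) else s(v, c)) 3 (by omega)
        ?_ ?_ ?_ ?_)
      · omega
      · intro i hi
        interval_cases i <;> simpa
      · intro i hi j hj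
        interval_cases i <;> interval_cases j <;> simp_all [eq_comm]
      · intro i hi
        refine ⟨v, ?_⟩
        have : i < 2 := by omega
        interval_cases i <;> simp
      · exact ⟨v, by simp⟩
    obtain ⟨k, ⟨e⟩⟩ := aux_pathIso hc hac hdeg
    exact (hpath k).false e
  · obtain ⟨u, w, hw, hl⟩ := Nat.sSup_mem hne (aux_bdd X)
    change w.length = X.circumf at hl
    rw [← hl]
    by_cases h : ∀ x ∈ w.support, ∀ y, X.G.Adj x y → s(x, y) ∈ w.edges
    · obtain ⟨e⟩ := aux_cycleIso hc w hw h
      exact ((hcyc _).false e).elim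
    · push Not at h
      obtain ⟨x, hx, y, hxy, hn⟩ := h
      have := aux_line X (aux_extend (w.rotate x hx) (hw.rotate hx) hxy
        (by rwa [(w.rotate_edges x hx).mem_iff]))
      rw [Walk.length_rotate] at this
      omega
end

section
/- Let G be a prolific graph. Then there exists r with 1 ≤ r ≤ 3 such that χ(L^r(G)) > χ(G), where χ denotes the chromatic number. -/
open SimpleGraph

theorem closed_univ {V : Type} {G : SimpleGraph V} (hc : G.Connected) (S : Set V)
    (v : V) (hv : v ∈ S) (hS : ∀ a b, a ∈ S → G.Adj a b → b ∈ S) (w : V) : w ∈ S := by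
  obtain ⟨p⟩ := hc.preconnected v w
  induction p with
  | nil => exact hv
  | cons h p ih => exact ih (hS _ _ hv h)

theorem exists_deg_three {V : Type} [Finite V] {G : SimpleGraph V} (hc : G.Connected)
    (hpath : ∀ k : ℕ, IsEmpty (G ≃g pathGraph k))
    (hcyc : ∀ k : ℕ, IsEmpty (G ≃g cycleGraph k)) :
    ∃ v a b c, G.Adj v a ∧ G.Adj v b ∧ G.Adj v c ∧ a ≠ b ∧ a ≠ c ∧ b ≠ c := by
  by_contra hcon
  have h3 : ∀ v a b c, G.Adj v a → G.Adj v b → G.Adj v c → a ≠ b → a = c ∨ b = c := by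
    intro v a b c h1 h2 h3 h4
    by_contra h5
    push Not at h5
    exact hcon ⟨v, a, b, c, h1, h2, h3, h4, h5.1, h5.2⟩
  classical
  let P : ℕ → Prop := fun m => ∃ f : ℕ → V, Set.InjOn f (Set.Iic m) ∧
    ∀ i < m, G.Adj (f i) (f (i + 1))
  have hP0 : P 0 := by
    obtain ⟨v⟩ := hc.nonempty
    exact ⟨fun _ => v, by intro a ha b hb _; simp at ha hb; omega, by simp⟩
  have hbd : ∀ m, P m → m ≤ Nat.card V := by
    rintro m ⟨f, hf, -⟩
    have h := Set.InjOn.ncard_image hf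
    have h2 := Set.ncard_le_card (f '' Set.Iic m)
    have h4 : (Set.Iic m).ncard = m + 1 := by
      rw [← Finset.coe_Iic, Set.ncard_coe_finset]; simp
    omega
  have hex : ∃ m, P m ∧ ¬ P (m + 1) := by
    by_contra hno
    push Not at hno
    have : ∀ m, P m := fun m => Nat.rec hP0 hno m
    have := hbd _ (this (Nat.card V + 1))
    omega
  obtain ⟨m, ⟨f, hinj, hadj⟩, hmax⟩ := hex
  have hne : ∀ i j, i ≤ m → j ≤ m → i ≠ j → f i ≠ f j :=
    fun i j hi hj hij h => hij (hinj hi hj h)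
  have hchord : ∀ i j, i < j → j ≤ m → G.Adj (f i) (f j) → j = i + 1 ∨ (i = 0 ∧ j = m) := by
    intro i j hij hj h
    by_contra hcon2
    have hj1 : j ≠ i + 1 := by tauto
    by_cases hi : i = 0
    · have hjm : j < m := by
        have : ¬ j = m := by tauto
        omega
      obtain ⟨j', rfl⟩ : ∃ j', j = j' + 1 := ⟨j - 1, by omega⟩
      rcases h3 _ _ _ _ (hadj j' (by omega)).symm (hadj (j' + 1) hjm) h.symm
        (hne _ _ (by omega) (by omega) (by omega)) with h | h
      · exact hne _ _ (by omega) (by omega) (by omega) h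
      · exact hne _ _ (by omega) (by omega) (by omega) h
    · obtain ⟨i', rfl⟩ : ∃ j', i = j' + 1 := ⟨i - 1, by omega⟩
      rcases h3 _ _ _ _ (hadj i' (by omega)).symm (hadj (i' + 1) (by omega)) h
        (hne _ _ (by omega) (by omega) (by omega)) with h | h
      · exact hne _ _ (by omega) (by omega) (by omega) h
      · exact hne _ _ (by omega) (by omega) (by omega) h
  have hclosed : ∀ a b, a ∈ f '' Set.Iic m → G.Adj a b → b ∈ f '' Set.Iic m := by
    rintro _ w ⟨i, hi, rfl⟩ hw
    simp only [Set.mem_Iic] at hi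
    by_contra hnot
    have hnot' : ∀ j ≤ m, f j ≠ w := fun j hj h => hnot ⟨j, hj, h⟩
    by_cases him : i = m
    · subst him
      apply hmax
      refine ⟨fun j => if j ≤ i then f j else w, ?_, ?_⟩
      · intro a ha b hb hab
        simp only [Set.mem_Iic] at ha hb
        simp only at hab
        split_ifs at hab with h1 h2 h2
        · exact hinj h1 h2 hab
        · exact absurd hab (hnot' _ h1)
        · exact absurd hab.symm (hnot' _ h2)
        · omega
      · intro j hj
        by_cases hji : j = i
        · subst hji; simpa using hw
        · have h1 : j ≤ i := by omega
          have h2 : j + 1 ≤ i := by omega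
          simp only [h1, h2, if_true]
          exact hadj j (by omega)
    · by_cases hi0 : i = 0
      · subst hi0
        apply hmax
        refine ⟨fun j => if j = 0 then w else f (j - 1), ?_, ?_⟩
        · intro a ha b hb hab
          simp only [Set.mem_Iic] at ha hb
          simp only at hab
          split_ifs at hab with h1 h2 h2
          · omega
          · exact absurd hab.symm (hnot' _ (by omega))
          · exact absurd hab (hnot' _ (by omega))
          · have := hinj (x₁ := a - 1) (x₂ := b - 1) (by simp; omega) (by simp; omega) hab
            omega
        · intro j hj
          by_cases hji : j = 0
          · subst hji; simpa using hw.symm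
          · obtain ⟨j', rfl⟩ : ∃ j', j = j' + 1 := ⟨j - 1, by omega⟩
            simpa using hadj j' (by omega)
      · obtain ⟨i', rfl⟩ : ∃ j', i = j' + 1 := ⟨i - 1, by omega⟩
        rcases h3 _ _ _ _ (hadj i' (by omega)).symm (hadj (i' + 1) (by omega)) hw
          (hne _ _ (by omega) (by omega) (by omega)) with h | h
        · exact hnot' _ (by omega) h
        · exact hnot' _ (by omega) h
  have hall := closed_univ hc (f '' Set.Iic m) (f 0) ⟨0, by simp, rfl⟩ hclosed
  have hbij : Function.Bijective (fun i : Fin (m + 1) => f i) := by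
    constructor
    · intro a b hab
      exact Fin.ext (hinj (by simp; omega) (by simp; omega) hab)
    · intro w
      obtain ⟨i, hi, rfl⟩ := hall w
      exact ⟨⟨i, Nat.lt_succ_of_le hi⟩, rfl⟩
  by_cases hcase : 2 ≤ m ∧ G.Adj (f 0) (f m)
  · apply (hcyc (m + 1)).false
    refine (RelIso.symm ⟨Equiv.ofBijective _ hbij, ?_⟩)
    have key : ∀ a b : Fin (m + 1), a < b →
        (G.Adj (f a) (f b) ↔ (cycleGraph (m + 1)).Adj a b) := by
      intro a b hab
      rw [cycleGraph_adj', Fin.sub_val_of_le hab.le, Fin.coe_sub_iff_lt.2 hab]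
      have hb := b.2
      have hab' : (a : ℕ) < b := hab
      constructor
      · intro h
        rcases hchord _ _ hab' (by omega) h with h | h <;> omega
      · intro h
        have : (b : ℕ) = a + 1 ∨ ((a : ℕ) = 0 ∧ (b : ℕ) = m) := by omega
        rcases this with h | h
        · rw [h]; exact hadj _ (by omega)
        · rw [h.1, h.2]; exact hcase.2
    intro a b
    simp only [Equiv.ofBijective_apply]
    rcases lt_trichotomy a b with h | h | h
    · exact key a b h
    · subst h; simp
    · rw [G.adj_comm, (cycleGraph (m + 1)).adj_comm]; exact key b a h
  · apply (hpath (m + 1)).false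
    refine (RelIso.symm ⟨Equiv.ofBijective _ hbij, ?_⟩)
    have key : ∀ a b : Fin (m + 1), a < b →
        (G.Adj (f a) (f b) ↔ (pathGraph (m + 1)).Adj a b) := by
      intro a b hab
      rw [pathGraph_adj]
      have hb := b.2
      have hab' : (a : ℕ) < b := hab
      constructor
      · intro h
        rcases hchord _ _ hab' (by omega) h with h' | h'
        · omega
        · rw [h'.1, h'.2] at h
          have : ¬ 2 ≤ m := fun h2 => hcase ⟨h2, h⟩
          omega
      · intro h
        have : (b : ℕ) = a + 1 := by omega
        rw [this]; exact hadj _ (by omega)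
    intro a b
    simp only [Equiv.ofBijective_apply]
    rcases lt_trichotomy a b with h | h | h
    · exact key a b h
    · subst h; simp
    · rw [G.adj_comm, (pathGraph (m + 1)).adj_comm]; exact key b a h

theorem degenerate_colorable {V : Type} [Finite V] (G : SimpleGraph V) (n : ℕ) (hn : 0 < n)
    (h : ∀ S : Set V, S.Nonempty → ∃ v ∈ S, (G.neighborSet v ∩ S).ncard < n) :
    G.Colorable n := by
  classical
  have key : ∀ k : ℕ, ∀ S : Set V, S.ncard = k →
      ∃ c : V → Fin n, ∀ u ∈ S, ∀ v ∈ S, G.Adj u v → c u ≠ c v := by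
    intro k
    induction k with
    | zero =>
      intro S hS
      rw [Set.ncard_eq_zero] at hS
      subst hS
      exact ⟨fun _ => ⟨0, hn⟩, by simp⟩
    | succ k ih =>
      intro S hS
      have hne : S.Nonempty := by
        rw [← Set.ncard_pos]; omega
      obtain ⟨v, hv, hlt⟩ := h S hne
      have hc1 : (S \ {v}).ncard = k := by
        rw [Set.ncard_sdiff_singleton_of_mem hv]; omega
      obtain ⟨c, hc⟩ := ih _ hc1
      have : ∃ x : Fin n, x ∉ c '' (G.neighborSet v ∩ S) := by
        by_contra hx
        push Not at hx
        have h1 : c '' (G.neighborSet v ∩ S) = Set.univ := Set.eq_univ_of_forall hx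
        have h2 := Set.ncard_image_le (f := c) (Set.toFinite (G.neighborSet v ∩ S))
        rw [h1, Set.ncard_univ, Nat.card_eq_fintype_card, Fintype.card_fin] at h2
        omega
      obtain ⟨x, hx⟩ := this
      have hx' : ∀ w ∈ S, G.Adj v w → c w ≠ x := fun w hw ha he => hx ⟨w, ⟨ha, hw⟩, he⟩
      refine ⟨Function.update c v x, ?_⟩
      intro a ha b hb hab
      by_cases hav : a = v
      · subst hav
        rw [Function.update_self, Function.update_of_ne hab.ne']
        exact (hx' _ hb hab).symm
      · by_cases hbv : b = v
        · subst hbv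
          rw [Function.update_self, Function.update_of_ne hav]
          exact hx' _ ha hab.symm
        · rw [Function.update_of_ne hav, Function.update_of_ne hbv]
          exact hc a ⟨ha, hav⟩ b ⟨hb, hbv⟩ hab
  obtain ⟨c, hc⟩ := key _ Set.univ rfl
  exact ⟨Coloring.mk c (fun {u v} huv => hc u trivial v trivial huv)⟩

theorem deg_le_chromatic_line {V : Type} [Finite V] (G : SimpleGraph V) (v : V) :
    ((G.neighborSet v).ncard : ℕ∞) ≤ G.lineGraph.chromaticNumber := by
  have := le_chromaticNumber_of_pairwise_adj (G := G.lineGraph) (ι := G.neighborSet v)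
    (n := ((G.neighborSet v).ncard)) (le_of_eq rfl) (fun w => ⟨s(v, w.1), w.2⟩) ?_
  · exact this
  · rintro ⟨a, ha⟩ ⟨b, hb⟩ hab
    refine ⟨?_, v, by simp, by simp⟩
    intro h
    exact hab (Subtype.ext (Sym2.congr_right.1 (congrArg Subtype.val h)))

theorem deg_line {V : Type} [Finite V] (G : SimpleGraph V) (u v : V) (h : G.Adj u v) :
    (G.neighborSet u).ncard + (G.neighborSet v).ncard ≤
      (G.lineGraph.neighborSet ⟨s(u, v), h⟩).ncard + 2 := by
  classical
  have hA : (G.neighborSet u \ {v}).ncard = (G.neighborSet u).ncard - 1 :=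
    Set.ncard_sdiff_singleton_of_mem h
  have hB : (G.neighborSet v \ {u}).ncard = (G.neighborSet v).ncard - 1 :=
    Set.ncard_sdiff_singleton_of_mem h.symm
  have hA' : ((fun w => s(u, w)) '' (G.neighborSet u \ {v})).ncard =
      (G.neighborSet u \ {v}).ncard :=
    Set.ncard_image_of_injective _ (fun a b hab => Sym2.congr_right.1 hab)
  have hB' : ((fun w => s(v, w)) '' (G.neighborSet v \ {u})).ncard =
      (G.neighborSet v \ {u}).ncard :=
    Set.ncard_image_of_injective _ (fun a b hab => Sym2.congr_right.1 hab)
  have hd : Disjoint ((fun w => s(u, w)) '' (G.neighborSet u \ {v}))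
      ((fun w => s(v, w)) '' (G.neighborSet v \ {u})) := by
    rw [Set.disjoint_left]
    rintro _ ⟨a, ⟨ha, ha'⟩, rfl⟩ ⟨b, ⟨hb, hb'⟩, hab⟩
    simp only [Sym2.eq_iff] at hab
    rcases hab with hab | hab
    · exact h.ne hab.1.symm
    · exact ha' hab.1.symm
  have hU := Set.ncard_union_eq hd
  have hsub : ((fun w => s(u, w)) '' (G.neighborSet u \ {v})) ∪
      ((fun w => s(v, w)) '' (G.neighborSet v \ {u})) ⊆
      Subtype.val '' (G.lineGraph.neighborSet ⟨s(u, v), h⟩) := by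
    rintro _ (⟨a, ⟨ha, ha'⟩, rfl⟩ | ⟨a, ⟨ha, ha'⟩, rfl⟩)
    · refine ⟨⟨s(u, a), ha⟩, ⟨?_, u, by simp, by simp⟩, rfl⟩
      intro he
      exact ha' (Sym2.congr_right.1 (congrArg Subtype.val he)).symm
    · refine ⟨⟨s(v, a), ha⟩, ⟨?_, v, by simp, by simp⟩, rfl⟩
      intro he
      have he' : s(u, v) = s(v, a) := congrArg Subtype.val he
      rw [Sym2.eq_swap] at he'
      exact ha' (Sym2.congr_right.1 he').symm
  have hle := Set.ncard_le_ncard hsub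
  rw [Set.ncard_image_of_injective _ Subtype.val_injective] at hle
  omega

theorem line3 {V : Type} [Finite V] (G : SimpleGraph V) (v u w : V) (hu : G.Adj v u)
    (hw : G.Adj v w) (huw : u ≠ w) (t : ℕ)
    (ht : t + 6 ≤ 2 * (G.neighborSet v).ncard + (G.neighborSet u).ncard +
      (G.neighborSet w).ncard) :
    (t : ℕ∞) ≤ G.lineGraph.lineGraph.lineGraph.chromaticNumber := by
  have h1 := deg_line G v u hu
  have h2 := deg_line G v w hw
  have hadj : G.lineGraph.Adj ⟨s(v, u), hu⟩ ⟨s(v, w), hw⟩ := by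
    refine ⟨?_, v, by simp, by simp⟩
    intro he
    exact huw (Sym2.congr_right.1 (congrArg Subtype.val he))
  have h3 := deg_line G.lineGraph _ _ hadj
  refine le_trans ?_ (deg_le_chromatic_line G.lineGraph.lineGraph ⟨s(_, _), hadj⟩)
  exact_mod_cast (by omega)

/-- For a prolific graph there is `r` with `1 ≤ r ≤ 3` and `χ(L^r(G)) > χ(G)`. -/
theorem chromaticNumber_index_le_three (X : FGraph) [Finite X.V] (hp : X.Prolific) :
    ∃ r : ℕ, 1 ≤ r ∧ r ≤ 3 ∧ X.G.chromaticNumber < (X.iter r).G.chromaticNumber := by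
  obtain ⟨V, G⟩ := X
  obtain ⟨hc, hpath, hcyc, -⟩ := hp
  dsimp only at hc hpath hcyc
  have : Finite V := ‹_›
  have : Fintype V := Fintype.ofFinite V
  obtain ⟨x, a, b, c, hxa, hxb, hxc, hab, hac, hbc⟩ := exists_deg_three hc hpath hcyc
  have hx3 : 3 ≤ (G.neighborSet x).ncard := by
    have h1 : ({a, b, c} : Set V).ncard = 3 := Set.ncard_eq_three.2 ⟨a, b, c, hab, hac, hbc, rfl⟩
    rw [← h1]
    refine Set.ncard_le_ncard ?_ (Set.toFinite _)
    rintro y (rfl | rfl | rfl) <;> assumption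
  show ∃ r : ℕ, 1 ≤ r ∧ r ≤ 3 ∧ G.chromaticNumber < _
  obtain ⟨k, hk⟩ : ∃ k : ℕ, G.chromaticNumber = k :=
    ⟨_, (ENat.natCast_toNat (chromaticNumber_ne_top_iff_exists.2 ⟨_, G.colorable_of_fintype⟩)).symm⟩
  rw [hk]
  by_cases hk2 : k ≤ 2
  · refine ⟨1, le_rfl, by norm_num, ?_⟩
    refine lt_of_lt_of_le ?_ (deg_le_chromatic_line G x)
    exact_mod_cast (by omega)
  · refine ⟨3, by norm_num, le_rfl, ?_⟩
    have hncol : ¬ G.Colorable (k - 1) := by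
      intro h
      have := h.chromaticNumber_le
      rw [hk] at this
      have : k ≤ k - 1 := by exact_mod_cast this
      omega
    have hS : ∃ S : Set V, S.Nonempty ∧ ∀ v ∈ S, k - 1 ≤ (G.neighborSet v ∩ S).ncard := by
      by_contra hno
      push Not at hno
      exact hncol (degenerate_colorable G (k - 1) (by omega) hno)
    obtain ⟨S, ⟨s0, hs0⟩, hS⟩ := hS
    have hdeg : ∀ v ∈ S, k - 1 ≤ (G.neighborSet v).ncard := fun v hv =>
      (hS v hv).trans (Set.ncard_le_ncard Set.inter_subset_left)
    have hv : ∃ v ∈ S, 3 ≤ (G.neighborSet v).ncard := by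
      by_contra hno
      push Not at hno
      have hcl : ∀ a b, a ∈ S → G.Adj a b → b ∈ S := by
        intro a b ha hab
        have h1 := hS a ha
        have h2 := hno a ha
        have h3 : G.neighborSet a ∩ S = G.neighborSet a :=
          Set.eq_of_subset_of_ncard_le Set.inter_subset_left (by omega)
        have : b ∈ G.neighborSet a ∩ S := by rw [h3]; exact hab
        exact this.2
      have := hno x (closed_univ hc S s0 hs0 hcl x)
      omega
    obtain ⟨v, hvS, hv3⟩ := hv
    obtain ⟨u, w, hu, hw, huw⟩ := (Set.one_lt_ncard_iff (Set.toFinite _)).1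
      (show 1 < (G.neighborSet v ∩ S).ncard by have := hS v hvS; omega)
    have h1 := hdeg v hvS
    have h2 := hdeg u hu.2
    have h3 := hdeg w hw.2
    refine lt_of_lt_of_le ?_ (line3 G v u w hu.1 hw.1 huw (k + 1) (by omega))
    exact_mod_cast Nat.lt_succ_self k
end
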